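/- arXiv:1912.06541 — 6 statements merged into one kernel-verified Lean document; each statement's English description precedes it below -/
import Mathlib

section
/- Assume ν is infinitesimally invariant for N₀, i.e. ∫_H N₀φ dν = 0 for every cylinder function φ. Then for every cylinder function φ one has the integration by parts formula ∫_H φ(x) N₀φ(x) ν(dx) = −(1/2) ∫_H |Q^{1/2}Dφ|²(x) ν(dx). -/
open MeasureTheory
open scoped InnerProductSpace BigOperators

/-- The coordinate map `x ↦ (⟪x, e 1⟫, …, ⟪x, e n⟫)` of a cylinder function. -/
noncomputable def coords {H : Type*} [NormedAddCommGroup H] [InnerProductSpace ℝ H]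
    (e : ℕ → H) (n : ℕ) (x : H) : Fin n → ℝ :=
  fun i => ⟪x, e i.1⟫_ℝ

/-- The `i`-th partial derivative of `f : ℝⁿ → ℝ`. -/
noncomputable def pd {n : ℕ} (f : (Fin n → ℝ) → ℝ) (i : Fin n) (y : Fin n → ℝ) : ℝ :=
  fderiv ℝ f y (Pi.single i 1)

/-- The second partial derivative `∂_{ii} f` of `f : ℝⁿ → ℝ`. -/
noncomputable def pd2 {n : ℕ} (f : (Fin n → ℝ) → ℝ) (i : Fin n) (y : Fin n → ℝ) : ℝ :=
  fderiv ℝ (fun z => pd f i z) y (Pi.single i 1)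

/-- `f ∈ C_b²(ℝⁿ)`: twice continuously differentiable with bounded derivatives
up to order 2. -/
def CbTwo {n : ℕ} (f : (Fin n → ℝ) → ℝ) : Prop :=
  ContDiff ℝ 2 f ∧ ∀ k : ℕ, k ≤ 2 → ∃ C : ℝ, ∀ y, ‖iteratedFDeriv ℝ k f y‖ ≤ C

/-- The Kolmogorov operator `N₀` applied to the cylinder function
`φ(x) = f(⟪x,e 1⟫, …, ⟪x,e n⟫)`:
`N₀φ(x) = (1/2) Σ_i q_i ∂_{ii} f + Σ_i a_i(x) ∂_i f`. -/
noncomputable def KolmN0 {H : Type*} [NormedAddCommGroup H] [InnerProductSpace ℝ H]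
    (e : ℕ → H) (q : ℕ → ℝ) (a : ℕ → H → ℝ) {n : ℕ}
    (f : (Fin n → ℝ) → ℝ) (x : H) : ℝ :=
  (1/2) * ∑ i : Fin n, q i.1 * pd2 f i (coords e n x)
    + ∑ i : Fin n, a i.1 x * pd f i (coords e n x)

lemma CbTwo.sq' {n : ℕ} {f : (Fin n → ℝ) → ℝ} (hf : CbTwo f) :
    CbTwo (fun y => f y * f y) := by
  refine ⟨hf.1.mul hf.1, fun k hk => ?_⟩
  obtain ⟨C0, h0⟩ := hf.2 0 (by norm_num)
  obtain ⟨C1, h1⟩ := hf.2 1 (by norm_num)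
  obtain ⟨C2, h2⟩ := hf.2 2 (by norm_num)
  have hM : ∀ j ≤ 2, ∀ y, ‖iteratedFDeriv ℝ j f y‖ ≤ max C0 (max C1 C2) := by
    intro j hj y
    interval_cases j
    · exact (h0 y).trans (le_max_left _ _)
    · exact (h1 y).trans ((le_max_left _ _).trans (le_max_right _ _))
    · exact (h2 y).trans ((le_max_right _ _).trans (le_max_right _ _))
  set M := max C0 (max C1 C2)
  refine ⟨∑ i ∈ Finset.range (k + 1), (k.choose i : ℝ) * M * M, fun y => ?_⟩
  refine (norm_iteratedFDeriv_mul_le (N := 2) hf.1 hf.1 y (by exact_mod_cast hk)).trans ?_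
  refine Finset.sum_le_sum fun i hi => ?_
  have hi' : i ≤ k := by simpa [Nat.lt_succ_iff] using hi
  have hA := hM i (hi'.trans hk) y
  have hB := hM (k - i) (by omega) y
  have : 0 ≤ M := (norm_nonneg _).trans hA
  gcongr

lemma pd_contDiff {n : ℕ} {f : (Fin n → ℝ) → ℝ} (hf : ContDiff ℝ 2 f) (i : Fin n) :
    ContDiff ℝ 1 (fun y => pd f i y) := by
  have h : ContDiff ℝ 1 (fderiv ℝ f) := hf.fderiv_right (by norm_num)
  exact h.clm_apply contDiff_const

lemma pd2_continuous {n : ℕ} {f : (Fin n → ℝ) → ℝ} (hf : ContDiff ℝ 2 f) (i : Fin n) :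
    Continuous (fun y => pd2 f i y) :=
  ((pd_contDiff hf i).continuous_fderiv (by norm_num)).clm_apply continuous_const

lemma f_bdd {n : ℕ} {f : (Fin n → ℝ) → ℝ} (hf : CbTwo f) : ∃ C : ℝ, ∀ y, ‖f y‖ ≤ C := by
  obtain ⟨C, h⟩ := hf.2 0 (by norm_num)
  exact ⟨C, fun y => by simpa using h y⟩

lemma pd_bdd {n : ℕ} {f : (Fin n → ℝ) → ℝ} (hf : CbTwo f) (i : Fin n) :
    ∃ C : ℝ, ∀ y, ‖pd f i y‖ ≤ C := by
  obtain ⟨C, h⟩ := hf.2 1 (by norm_num)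
  refine ⟨C * ‖(Pi.single i 1 : Fin n → ℝ)‖, fun y => ?_⟩
  refine ((fderiv ℝ f y).le_opNorm _).trans ?_
  have := h y
  rw [norm_iteratedFDeriv_one] at this
  gcongr

lemma pd2_bdd {n : ℕ} {f : (Fin n → ℝ) → ℝ} (hf : CbTwo f) (i : Fin n) :
    ∃ C : ℝ, ∀ y, ‖pd2 f i y‖ ≤ C := by
  obtain ⟨C, h⟩ := hf.2 2 (by norm_num)
  refine ⟨C * ‖(Pi.single i 1 : Fin n → ℝ)‖ * ‖(Pi.single i 1 : Fin n → ℝ)‖, fun y => ?_⟩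
  have hd : DifferentiableAt ℝ (fderiv ℝ f) y :=
    ((hf.1.fderiv_right (m := 1) (by norm_num)).differentiable (by norm_num)) y
  have e : pd2 f i y = (fderiv ℝ (fderiv ℝ f) y (Pi.single i 1)) (Pi.single i 1) := by
    unfold pd2 pd
    rw [fderiv_clm_apply hd (differentiableAt_const _)]
    simp
  rw [e]
  refine ((fderiv ℝ (fderiv ℝ f) y).le_opNorm₂ _ _).trans ?_
  have := h y
  rw [← norm_iteratedFDeriv_fderiv, norm_iteratedFDeriv_one] at this
  gcongr

lemma pd_sq {n : ℕ} {f : (Fin n → ℝ) → ℝ} (hf : ContDiff ℝ 2 f) (i : Fin n) (y : Fin n → ℝ) :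
    pd (fun y => f y * f y) i y = 2 * (f y * pd f i y) := by
  have hd : DifferentiableAt ℝ f y := hf.differentiable (by norm_num) y
  unfold pd
  rw [fderiv_fun_mul hd hd]
  simp; ring

lemma pd2_sq {n : ℕ} {f : (Fin n → ℝ) → ℝ} (hf : ContDiff ℝ 2 f) (i : Fin n) (y : Fin n → ℝ) :
    pd2 (fun y => f y * f y) i y = 2 * (f y * pd2 f i y) + 2 * (pd f i y) ^ 2 := by
  have hd : DifferentiableAt ℝ f y := hf.differentiable (by norm_num) y
  have hp : DifferentiableAt ℝ (fun y => pd f i y) y :=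
    (pd_contDiff hf i).differentiable (by norm_num) y
  unfold pd2
  simp only [pd_sq hf]
  rw [fderiv_const_mul (hd.fun_mul hp), fderiv_fun_mul hd hp]
  have : fderiv ℝ f y (Pi.single i 1) = pd f i y := rfl
  simp [this]; ring

/-- If `ν` is infinitesimally invariant for `N₀`, then for every cylinder
function `φ`, `∫ φ N₀φ dν = −(1/2) ∫ |Q^{1/2}Dφ|² dν`. -/
theorem integration_by_parts_of_infinitesimally_invariant
    {H : Type*} [NormedAddCommGroup H] [InnerProductSpace ℝ H]
    [MeasurableSpace H] [BorelSpace H] [SecondCountableTopology H]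
    (ν : Measure H) [IsProbabilityMeasure ν]
    (e : ℕ → H) (he : Orthonormal ℝ e)
    (q : ℕ → ℝ) (hq : ∀ i, 0 < q i)
    (a : ℕ → H → ℝ) (ha : ∀ i, Measurable (a i))
    (ha2 : ∀ i, Integrable (fun x => (a i x) ^ 2) ν)
    (hinv : ∀ (n : ℕ), 1 ≤ n → ∀ f : (Fin n → ℝ) → ℝ, CbTwo f →
      ∫ x, KolmN0 e q a f x ∂ν = 0)
    (n : ℕ) (hn : 1 ≤ n) (f : (Fin n → ℝ) → ℝ) (hf : CbTwo f) :
    ∫ x, f (coords e n x) * KolmN0 e q a f x ∂ν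
      = -(1/2) * ∫ x, ∑ i : Fin n, q i.1 * (pd f i (coords e n x)) ^ 2 ∂ν := by
  have hc : Continuous (coords e n) := by unfold coords; fun_prop
  have hai : ∀ i, Integrable (a i) ν := fun i =>
    ((memLp_two_iff_integrable_sq (ha i).aestronglyMeasurable).2 (ha2 i)).integrable
      (by norm_num)
  have hbI : ∀ g : (Fin n → ℝ) → ℝ, Continuous g → (∃ C : ℝ, ∀ y, ‖g y‖ ≤ C) →
      ∀ u : H → ℝ, Integrable u ν → Integrable (fun x => g (coords e n x) * u x) ν := by
    rintro g hg ⟨C, hC⟩ u hu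
    exact hu.bdd_mul (c := C) (hg.comp hc).aestronglyMeasurable
      (Filter.Eventually.of_forall fun x => hC _)
  have hI1 : Integrable (fun x => KolmN0 e q a f x) ν := by
    unfold KolmN0
    refine ((integrable_finsetSum _ fun i _ => ?_).const_mul _).add
      (integrable_finsetSum _ fun i _ => ?_)
    · have := hbI _ (pd2_continuous hf.1 i) (pd2_bdd hf i) (fun _ => q i.1) (integrable_const _)
      simpa only [mul_comm] using this
    · have := hbI _ (pd_contDiff hf.1 i).continuous (pd_bdd hf i) _ (hai i.1)
      simpa only [mul_comm] using this
  have hI2 := hbI f hf.1.continuous (f_bdd hf) _ hI1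
  have hI3 : Integrable (fun x => ∑ i : Fin n, q i.1 * (pd f i (coords e n x)) ^ 2) ν := by
    refine integrable_finsetSum _ fun i _ => ?_
    have h1 := hbI _ (pd_contDiff hf.1 i).continuous (pd_bdd hf i) (fun _ => q i.1)
      (integrable_const _)
    have h2 := hbI _ (pd_contDiff hf.1 i).continuous (pd_bdd hf i) _ h1
    refine h2.congr (Filter.Eventually.of_forall fun x => ?_)
    simp only
    ring
  have key : ∀ x, KolmN0 e q a (fun y => f y * f y) x
      = 2 * (f (coords e n x) * KolmN0 e q a f x)
        + ∑ i : Fin n, q i.1 * (pd f i (coords e n x)) ^ 2 := by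
    intro x
    simp only [KolmN0, pd_sq hf.1, pd2_sq hf.1, mul_add, Finset.mul_sum]
    simp only [← Finset.sum_add_distrib]
    apply Finset.sum_congr rfl
    intros
    ring
  have h0 := hinv n hn _ hf.sq'
  simp only [key] at h0
  rw [integral_add (hI2.const_mul 2) hI3, integral_const_mul] at h0
  linarith
end

section
/- Assume ν is infinitesimally invariant for N₀, i.e. ∫_H N₀φ dν = 0 for every cylinder function φ, and assume N₀ is symmetric on cylinder functions, i.e. ∫_H ψ N₀φ dν = ∫_H φ N₀ψ dν for all cylinder functions φ, ψ. Then for all cylinder functions φ(x) = f(⟨x,e_1⟩,…,⟨x,e_n⟩) and ψ(x) = g(⟨x,e_1⟩,…,⟨x,e_m⟩) one has ∫_H ψ N₀φ dν = −(1/2) ∫_H Σ_i q_i ∂_i f(⟨x,e_1⟩,…,⟨x,e_n⟩) ∂_i g(⟨x,e_1⟩,…,⟨x,e_m⟩) ν(dx), where ∂_i f := 0 for i > n and ∂_i g := 0 for i > m. -/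
open MeasureTheory
open scoped InnerProductSpace BigOperators

/-- The `i`-th partial derivative of `f : ℝⁿ → ℝ`, extended by `0` for `i ≥ n`. -/
noncomputable def pdext {n : ℕ} (f : (Fin n → ℝ) → ℝ) (i : ℕ) (y : Fin n → ℝ) : ℝ :=
  if h : i < n then pd f ⟨i, h⟩ y else 0

namespace SymIBP

/-- restriction to the first coordinates -/
noncomputable def P {n k : ℕ} (h : n ≤ k) : (Fin k → ℝ) →L[ℝ] (Fin n → ℝ) :=
  Pi.compRightL ℝ (fun _ => ℝ) (Fin.castLE h)

lemma P_single {n k : ℕ} (h : n ≤ k) (i : Fin k) :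
    P h (Pi.single i 1) = if h' : i.1 < n then Pi.single ⟨i.1, h'⟩ 1 else 0 := by
  ext j
  by_cases h' : i.1 < n
  · rw [dif_pos h']
    simp only [P, Pi.compRightL_apply, Pi.single_apply]
    congr 1
    simp [Fin.ext_iff]
  · rw [dif_neg h']
    simp only [P, Pi.compRightL_apply, Pi.single_apply, Pi.zero_apply]
    rw [if_neg]
    intro hj
    apply h'
    rw [← hj]
    exact j.2

lemma pd_comp {n k : ℕ} (h : n ≤ k) {f : (Fin n → ℝ) → ℝ} (hf : Differentiable ℝ f) (i : Fin k)
    (y : Fin k → ℝ) : pd (fun z => f (P h z)) i y = pdext f i.1 (P h y) := by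
  have h1 : HasFDerivAt (fun z => f (P h z)) ((fderiv ℝ f (P h y)).comp (P h)) y :=
    (hf (P h y)).hasFDerivAt.comp y (P h).hasFDerivAt
  unfold pd pdext
  rw [h1.fderiv, ContinuousLinearMap.comp_apply, P_single]
  split_ifs <;> simp [pd]

lemma pd_contDiff {n : ℕ} {f : (Fin n → ℝ) → ℝ} (hf : ContDiff ℝ 2 f) (i : Fin n) :
    ContDiff ℝ 1 (pd f i) := by
  have : ContDiff ℝ 1 (fderiv ℝ f) := hf.fderiv_right (by norm_num)
  exact this.clm_apply contDiff_const

lemma pd2_cont {n : ℕ} {f : (Fin n → ℝ) → ℝ} (hf : ContDiff ℝ 2 f) (i : Fin n) :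
    Continuous (pd2 f i) := by
  have : ContDiff ℝ 0 (fderiv ℝ (pd f i)) := (pd_contDiff hf i).fderiv_right (by norm_num)
  exact (this.clm_apply contDiff_const).continuous

lemma pd2_comp {n k : ℕ} (h : n ≤ k) {f : (Fin n → ℝ) → ℝ} (hf : ContDiff ℝ 2 f) (i : Fin k)
    (y : Fin k → ℝ) : pd2 (fun z => f (P h z)) i y =
      if h' : i.1 < n then pd2 f ⟨i.1, h'⟩ (P h y) else 0 := by
  have h0 : pd2 (fun z => f (P h z)) i y = pd (fun z => pdext f i.1 (P h z)) i y := by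
    unfold pd2
    simp_rw [pd_comp h (hf.differentiable (by norm_num))]
    rfl
  rw [h0]
  by_cases h' : i.1 < n
  · rw [dif_pos h']
    have : (fun z => pdext f i.1 (P h z)) = fun z => pd f ⟨i.1, h'⟩ (P h z) := by
      ext z; simp [pdext, h']
    rw [this, pd_comp h ((pd_contDiff hf _).differentiable (by norm_num))]
    simp only [pdext, dif_pos h']
    rfl
  · rw [dif_neg h']
    have : (fun z => pdext f i.1 (P h z)) = fun z => 0 := by
      ext z; simp [pdext, h']
    rw [this]
    simp [pd]

lemma sum_ext {n k : ℕ} (h : n ≤ k) (F : ℕ → ℝ) (hF : ∀ i, n ≤ i → F i = 0) :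
    ∑ i : Fin k, F i.1 = ∑ i : Fin n, F i.1 := by
  rw [Fin.sum_univ_eq_sum_range F k, Fin.sum_univ_eq_sum_range F n]
  symm
  apply Finset.sum_subset
  · intro x hx; simp only [Finset.mem_range] at *; omega
  · intro x _ hx; apply hF; simpa using hx

lemma cb_comp {n k : ℕ} (h : n ≤ k) {f : (Fin n → ℝ) → ℝ} (hf : CbTwo f) :
    CbTwo (fun z => f (P h z)) := by
  refine ⟨hf.1.comp (P h).contDiff, fun j hj => ?_⟩
  obtain ⟨C, hC⟩ := hf.2 j hj
  refine ⟨C * ∏ _i : Fin j, ‖P h‖, fun y => ?_⟩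
  have := (P h).iteratedFDeriv_comp_right hf.1 y (i := j) (by exact_mod_cast hj)
  change ‖iteratedFDeriv ℝ j (f ∘ P h) y‖ ≤ _
  rw [this]
  refine (ContinuousMultilinearMap.norm_compContinuousLinearMap_le _ _).trans ?_
  exact mul_le_mul_of_nonneg_right (hC _) (Finset.prod_nonneg fun _ _ => norm_nonneg _)

lemma cb_mul {k : ℕ} {f g : (Fin k → ℝ) → ℝ} (hf : CbTwo f) (hg : CbTwo g) :
    CbTwo (fun z => f z * g z) := by
  refine ⟨hf.1.mul hg.1, fun j hj => ?_⟩
  have hf2 : ∀ i : ℕ, ∃ C : ℝ, i ≤ 2 → ∀ y, ‖iteratedFDeriv ℝ i f y‖ ≤ C := fun i => by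
    by_cases hi : i ≤ 2
    · obtain ⟨C, hC⟩ := hf.2 i hi
      exact ⟨C, fun _ => hC⟩
    · exact ⟨0, fun h => absurd h hi⟩
  have hg2 : ∀ i : ℕ, ∃ C : ℝ, i ≤ 2 → ∀ y, ‖iteratedFDeriv ℝ i g y‖ ≤ C := fun i => by
    by_cases hi : i ≤ 2
    · obtain ⟨C, hC⟩ := hg.2 i hi
      exact ⟨C, fun _ => hC⟩
    · exact ⟨0, fun h => absurd h hi⟩
  choose A hA using hf2
  choose B hB using hg2
  refine ⟨∑ i ∈ Finset.range (j + 1), (j.choose i : ℝ) * A i * B (j - i), fun y => ?_⟩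
  refine (norm_iteratedFDeriv_mul_le hf.1 hg.1 y (n := j) (by exact_mod_cast hj)).trans ?_
  apply Finset.sum_le_sum
  intro i hi
  have hi' : i ≤ 2 := by simp only [Finset.mem_range] at hi; omega
  have h1 := hA i hi' y
  have h2 := hB (j - i) (by omega) y
  have h3 : 0 ≤ A i := (norm_nonneg _).trans h1
  gcongr

lemma cb_bd {k : ℕ} {f : (Fin k → ℝ) → ℝ} (hf : CbTwo f) : ∃ C, ∀ y, ‖f y‖ ≤ C := by
  obtain ⟨C, hC⟩ := hf.2 0 (by norm_num)
  exact ⟨C, fun y => by simpa using hC y⟩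

lemma cb_pd_bd {k : ℕ} {f : (Fin k → ℝ) → ℝ} (hf : CbTwo f) (i : Fin k) :
    ∃ C, ∀ y, ‖pd f i y‖ ≤ C := by
  obtain ⟨C, hC⟩ := hf.2 1 (by norm_num)
  refine ⟨C * ‖(Pi.single i 1 : Fin k → ℝ)‖, fun y => ?_⟩
  have := hC y
  rw [norm_iteratedFDeriv_one] at this
  exact (ContinuousLinearMap.le_opNorm _ _).trans (by gcongr)

lemma cb_pd2_bd {k : ℕ} {f : (Fin k → ℝ) → ℝ} (hf : CbTwo f) (i : Fin k) :
    ∃ C, ∀ y, ‖pd2 f i y‖ ≤ C := by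
  obtain ⟨C, hC⟩ := hf.2 2 le_rfl
  refine ⟨C * ∏ _i : Fin 2, ‖(Pi.single i 1 : Fin k → ℝ)‖, fun y => ?_⟩
  have h1 : pd2 f i y = iteratedFDeriv ℝ 2 f y (fun _ => Pi.single i 1) := by
    rw [iteratedFDeriv_two_apply]
    have hd : DifferentiableAt ℝ (fderiv ℝ f) y :=
      ((hf.1.fderiv_right (m := 1) (by norm_num)).differentiable (by norm_num)) y
    unfold pd2 pd
    rw [fderiv_clm_apply hd (differentiableAt_const _)]
    simp
  rw [h1]
  refine (ContinuousMultilinearMap.le_opNorm _ _).trans ?_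
  exact mul_le_mul_of_nonneg_right (hC y) (Finset.prod_nonneg fun _ _ => norm_nonneg _)

lemma pd_mul {k : ℕ} {f g : (Fin k → ℝ) → ℝ} (hf : Differentiable ℝ f) (hg : Differentiable ℝ g)
    (i : Fin k) (y : Fin k → ℝ) :
    pd (fun z => f z * g z) i y = f y * pd g i y + g y * pd f i y := by
  unfold pd
  rw [fderiv_fun_mul (hf y) (hg y)]
  simp

lemma pd2_mul {k : ℕ} {f g : (Fin k → ℝ) → ℝ} (hf : ContDiff ℝ 2 f) (hg : ContDiff ℝ 2 g)
    (i : Fin k) (y : Fin k → ℝ) :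
    pd2 (fun z => f z * g z) i y =
      f y * pd2 g i y + g y * pd2 f i y + 2 * (pd f i y * pd g i y) := by
  have df := hf.differentiable (by norm_num)
  have dg := hg.differentiable (by norm_num)
  have dpf := (pd_contDiff hf i).differentiable (by norm_num)
  have dpg := (pd_contDiff hg i).differentiable (by norm_num)
  have h0 : pd2 (fun z => f z * g z) i y =
      fderiv ℝ (fun z => f z * pd g i z + g z * pd f i z) y (Pi.single i 1) := by
    unfold pd2
    simp_rw [pd_mul df dg]
  rw [h0, fderiv_fun_add ((df y).fun_mul (dpg y)) ((dg y).fun_mul (dpf y)),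
    fderiv_fun_mul (df y) (dpg y), fderiv_fun_mul (dg y) (dpf y)]
  simp only [ContinuousLinearMap.add_apply, ContinuousLinearMap.smul_apply, smul_eq_mul]
  change f y * pd2 g i y + pd g i y * pd f i y + (g y * pd2 f i y + pd f i y * pd g i y) = _
  ring

variable {H : Type*} [NormedAddCommGroup H] [InnerProductSpace ℝ H]

lemma coords_cont (e : ℕ → H) (n : ℕ) : Continuous (coords e n) := by
  unfold coords
  fun_prop

lemma kolm_mul (e : ℕ → H) (q : ℕ → ℝ) (a : ℕ → H → ℝ) {k : ℕ} {f g : (Fin k → ℝ) → ℝ}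
    (hf : ContDiff ℝ 2 f) (hg : ContDiff ℝ 2 g) (x : H) :
    KolmN0 e q a (fun z => f z * g z) x =
      f (coords e k x) * KolmN0 e q a g x + g (coords e k x) * KolmN0 e q a f x
       + ∑ i : Fin k, q i.1 * pd f i (coords e k x) * pd g i (coords e k x) := by
  unfold KolmN0
  simp_rw [pd2_mul hf hg,
    pd_mul (hf.differentiable (by norm_num)) (hg.differentiable (by norm_num))]
  simp only [mul_add, Finset.mul_sum, ← Finset.sum_add_distrib]
  refine Finset.sum_congr rfl fun i _ => ?_
  ring

lemma kolm_comp (e : ℕ → H) (q : ℕ → ℝ) (a : ℕ → H → ℝ) {n k : ℕ} (h : n ≤ k)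
    {f : (Fin n → ℝ) → ℝ} (hf : ContDiff ℝ 2 f) (x : H) :
    KolmN0 e q a (fun z => f (P h z)) x = KolmN0 e q a f x := by
  have hc : P h (coords e k x) = coords e n x := rfl
  unfold KolmN0
  simp_rw [pd2_comp h hf, pd_comp h (hf.differentiable (by norm_num)), hc]
  have h1 := sum_ext h (fun i => q i * if h' : i < n then pd2 f ⟨i, h'⟩ (coords e n x) else 0)
    (fun i hi => by simp [hi])
  have h2 := sum_ext h (fun i => a i x * pdext f i (coords e n x))
    (fun i hi => by simp [pdext, hi])
  rw [h1, h2]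
  simp [pdext]

variable [MeasurableSpace H] [BorelSpace H] [SecondCountableTopology H]

lemma integrable_bd (ν : Measure H) [IsProbabilityMeasure ν] (e : ℕ → H) {k : ℕ}
    {u : (Fin k → ℝ) → ℝ} (hu : Continuous u) (hb : ∃ C, ∀ y, ‖u y‖ ≤ C) :
    Integrable (fun x => u (coords e k x)) ν := by
  obtain ⟨C, hC⟩ := hb
  exact Integrable.of_bound (hu.comp (coords_cont e k)).aestronglyMeasurable C
    (Filter.Eventually.of_forall fun x => hC _)

lemma integrable_mul_bd (ν : Measure H) (e : ℕ → H) {k : ℕ}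
    {u : (Fin k → ℝ) → ℝ} (hu : Continuous u) (hb : ∃ C, ∀ y, ‖u y‖ ≤ C) {v : H → ℝ}
    (hv : Integrable v ν) :
    Integrable (fun x => u (coords e k x) * v x) ν := by
  obtain ⟨C, hC⟩ := hb
  exact hv.bdd_mul (hu.comp (coords_cont e k)).aestronglyMeasurable
    (Filter.Eventually.of_forall fun x => hC _)

lemma kolm_integrable (ν : Measure H) [IsProbabilityMeasure ν] (e : ℕ → H) (q : ℕ → ℝ)
    (a : ℕ → H → ℝ) (ha : ∀ i, Measurable (a i))
    (ha2 : ∀ i, Integrable (fun x => (a i x) ^ 2) ν) {k : ℕ} {f : (Fin k → ℝ) → ℝ}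
    (hf : CbTwo f) : Integrable (KolmN0 e q a f) ν := by
  unfold KolmN0
  refine Integrable.add (Integrable.const_mul ?_ _) ?_
  · refine integrable_finsetSum _ fun i _ => Integrable.const_mul ?_ _
    exact integrable_bd ν e (pd2_cont hf.1 i) (cb_pd2_bd hf i)
  · refine integrable_finsetSum _ fun i _ => ?_
    have hai : Integrable (a i.1) ν :=
      ((memLp_two_iff_integrable_sq (ha i.1).aestronglyMeasurable).2 (ha2 i.1)).integrable
        (by norm_num)
    have := integrable_mul_bd ν e (pd_contDiff hf.1 i).continuous (cb_pd_bd hf i) hai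
    simpa only [mul_comm] using this

end SymIBP

/-- If `ν` is infinitesimally invariant for `N₀` and `N₀` is symmetric on
cylinder functions, then for all cylinder functions `φ, ψ` one has
`∫ ψ N₀φ dν = −(1/2) ∫ Σ_i q_i ∂_i f ∂_i g dν`. -/
theorem symmetric_integration_by_parts
    {H : Type*} [NormedAddCommGroup H] [InnerProductSpace ℝ H]
    [MeasurableSpace H] [BorelSpace H] [SecondCountableTopology H]
    (ν : Measure H) [IsProbabilityMeasure ν]
    (e : ℕ → H) (he : Orthonormal ℝ e)
    (q : ℕ → ℝ) (hq : ∀ i, 0 < q i)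
    (a : ℕ → H → ℝ) (ha : ∀ i, Measurable (a i))
    (ha2 : ∀ i, Integrable (fun x => (a i x) ^ 2) ν)
    (hinv : ∀ (n : ℕ), 1 ≤ n → ∀ f : (Fin n → ℝ) → ℝ, CbTwo f →
      ∫ x, KolmN0 e q a f x ∂ν = 0)
    (hsym : ∀ (n : ℕ), 1 ≤ n → ∀ f : (Fin n → ℝ) → ℝ, CbTwo f →
      ∀ (m : ℕ), 1 ≤ m → ∀ g : (Fin m → ℝ) → ℝ, CbTwo g →
      ∫ x, g (coords e m x) * KolmN0 e q a f x ∂ν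
        = ∫ x, f (coords e n x) * KolmN0 e q a g x ∂ν)
    (n : ℕ) (hn : 1 ≤ n) (f : (Fin n → ℝ) → ℝ) (hf : CbTwo f)
    (m : ℕ) (hm : 1 ≤ m) (g : (Fin m → ℝ) → ℝ) (hg : CbTwo g) :
    ∫ x, g (coords e m x) * KolmN0 e q a f x ∂ν
      = -(1/2) * ∫ x, ∑' i : ℕ,
          q i * pdext f i (coords e n x) * pdext g i (coords e m x) ∂ν := by
  classical
  have hnk : n ≤ max n m := le_max_left _ _
  have hmk : m ≤ max n m := le_max_right _ _
  generalize max n m = k at hnk hmk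
  have hk : 1 ≤ k := hn.trans hnk
  have hF := SymIBP.cb_comp hnk hf
  have hG := SymIBP.cb_comp hmk hg
  have h0 := hinv k hk _ (SymIBP.cb_mul hF hG)
  have hs := hsym n hn f hf m hm g hg
  have hkey : ∀ x, KolmN0 e q a
      (fun z => f (SymIBP.P hnk z) * g (SymIBP.P hmk z)) x =
      (f (coords e n x) * KolmN0 e q a g x + g (coords e m x) * KolmN0 e q a f x) +
      ∑' i : ℕ, q i * pdext f i (coords e n x) * pdext g i (coords e m x) := by
    intro x
    rw [SymIBP.kolm_mul e q a hF.1 hG.1, SymIBP.kolm_comp e q a hnk hf.1,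
      SymIBP.kolm_comp e q a hmk hg.1]
    congr 1
    simp_rw [SymIBP.pd_comp hnk (hf.1.differentiable (by norm_num)),
      SymIBP.pd_comp hmk (hg.1.differentiable (by norm_num))]
    rw [tsum_eq_sum (s := Finset.range k)]
    · exact Fin.sum_univ_eq_sum_range
        (fun i => q i * pdext f i (coords e n x) * pdext g i (coords e m x)) k
    · intro i hi
      have : ¬ i < n := by simp only [Finset.mem_range] at hi; omega
      simp [pdext, this]
  have i1 : Integrable (fun x => f (coords e n x) * KolmN0 e q a g x) ν :=
    SymIBP.integrable_mul_bd ν e hf.1.continuous (SymIBP.cb_bd hf)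
      (SymIBP.kolm_integrable ν e q a ha ha2 hg)
  have i2 : Integrable (fun x => g (coords e m x) * KolmN0 e q a f x) ν :=
    SymIBP.integrable_mul_bd ν e hg.1.continuous (SymIBP.cb_bd hg)
      (SymIBP.kolm_integrable ν e q a ha ha2 hf)
  have i0 := SymIBP.kolm_integrable ν e q a ha ha2 (SymIBP.cb_mul hF hG)
  have hΓ : ∀ x, ∑' i : ℕ, q i * pdext f i (coords e n x) * pdext g i (coords e m x) =
      KolmN0 e q a (fun z => f (SymIBP.P hnk z) * g (SymIBP.P hmk z)) x -
      (f (coords e n x) * KolmN0 e q a g x + g (coords e m x) * KolmN0 e q a f x) := by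
    intro x
    rw [hkey x]
    ring
  have i12 : Integrable (fun x => f (coords e n x) * KolmN0 e q a g x +
      g (coords e m x) * KolmN0 e q a f x) ν := i1.add i2
  simp_rw [hΓ]
  rw [integral_sub i0 i12, integral_add i1 i2, h0, ← hs]
  ring
end

section
/- Let (X, 𝒜, ν) be a probability space and let T : L¹(ν) → L¹(ν) be a linear operator which is positivity preserving (f ≥ 0 ν-a.e. implies Tf ≥ 0 ν-a.e.) and sub-Markovian (T1 ≤ 1 ν-a.e., where 1 denotes the constant function 1). Then for every f ∈ L¹(ν) with f ≥ 0 ν-a.e., one has T(√f) ≤ √(Tf) ν-a.e. -/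
open MeasureTheory

/-- A positivity preserving sub-Markovian linear operator `T` on `L¹(ν)`
over a probability space satisfies the Jensen-type inequality `T(√f) ≤ √(Tf)` a.e. for
every a.e. nonnegative `f ∈ L¹(ν)`. -/
theorem subMarkovian_sqrt_jensen
    {X : Type*} [MeasurableSpace X] (ν : Measure X) [IsProbabilityMeasure ν]
    (T : Lp ℝ 1 ν →ₗ[ℝ] Lp ℝ 1 ν)
    (hpos : ∀ f : Lp ℝ 1 ν, (∀ᵐ x ∂ν, 0 ≤ f x) → (∀ᵐ x ∂ν, 0 ≤ T f x))
    (hsub : ∀ f : Lp ℝ 1 ν, (∀ᵐ x ∂ν, f x = 1) → (∀ᵐ x ∂ν, T f x ≤ 1))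
    (f : Lp ℝ 1 ν) (hf : ∀ᵐ x ∂ν, 0 ≤ f x)
    (g : Lp ℝ 1 ν) (hg : ∀ᵐ x ∂ν, g x = Real.sqrt (f x)) :
    ∀ᵐ x ∂ν, T g x ≤ Real.sqrt (T f x) := by
  obtain ⟨e, he⟩ : ∃ e : Lp ℝ 1 ν, ∀ᵐ x ∂ν, e x = 1 :=
    ⟨(memLp_const (1 : ℝ)).toLp (fun _ => (1 : ℝ)), MemLp.coeFn_toLp _⟩
  have key : ∀ q : ℚ, ∀ᵐ x ∂ν, 0 ≤ T f x - 2 * (q : ℝ) * T g x + (q : ℝ) ^ 2 := by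
    intro q
    have h1 := hpos (f - (2 * (q : ℝ)) • g + ((q : ℝ) ^ 2) • e) (by
      filter_upwards [hf, hg, he, Lp.coeFn_add (f - (2 * (q : ℝ)) • g) (((q : ℝ) ^ 2) • e),
        Lp.coeFn_sub f ((2 * (q : ℝ)) • g), Lp.coeFn_smul (2 * (q : ℝ)) g,
        Lp.coeFn_smul ((q : ℝ) ^ 2) e] with x a b c d1 d2 d3 d4
      rw [d1, Pi.add_apply, d2, Pi.sub_apply, d3, d4, Pi.smul_apply, Pi.smul_apply, b, c,
        smul_eq_mul, smul_eq_mul]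
      nlinarith [Real.sq_sqrt a, sq_nonneg (Real.sqrt (f x) - q)])
    rw [map_add, map_sub, map_smul, map_smul] at h1
    filter_upwards [h1, hsub e he,
        Lp.coeFn_add (T f - (2 * (q : ℝ)) • T g) (((q : ℝ) ^ 2) • T e),
        Lp.coeFn_sub (T f) ((2 * (q : ℝ)) • T g), Lp.coeFn_smul (2 * (q : ℝ)) (T g),
        Lp.coeFn_smul ((q : ℝ) ^ 2) (T e)] with x a b d1 d2 d3 d4
    rw [d1, Pi.add_apply, d2, Pi.sub_apply, d3, d4, Pi.smul_apply, Pi.smul_apply,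
        smul_eq_mul, smul_eq_mul] at a
    nlinarith [mul_le_mul_of_nonneg_left b (sq_nonneg (q : ℝ))]
  filter_upwards [ae_all_iff.2 key] with x hx
  have hr : ∀ r : ℝ, 0 ≤ T f x - 2 * r * T g x + r ^ 2 := by
    intro r
    have hc : IsClosed {r : ℝ | 0 ≤ T f x - 2 * r * T g x + r ^ 2} :=
      isClosed_le (by fun_prop) (by fun_prop)
    exact Rat.denseRange_cast.induction_on (p := fun r : ℝ => 0 ≤ T f x - 2 * r * T g x + r ^ 2)
      r hc hx
  apply Real.le_sqrt_of_sq_le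
  nlinarith [hr (T g x)]
end

section
/- Let (X, 𝒜, ν) be a probability space and let S : L¹(ν) → L¹(ν) be a linear operator which is positivity preserving (f ≥ 0 ν-a.e. implies Sf ≥ 0 ν-a.e.) and sub-Markovian (S1 ≤ 1 ν-a.e.). Let λ > 0 and let g ∈ L¹(ν) with g ≥ 0 ν-a.e. satisfy (λ/(1+λ)) Sg ≤ g ν-a.e. Then (λ/(1+λ)) S(√g) ≤ √g ν-a.e. -/
open MeasureTheory

/-- If `S` is a positivity preserving sub-Markovian linear operator on
`L¹(ν)` over a probability space, `λ > 0`, and `g ∈ L¹(ν)` is a.e. nonnegative with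
`(λ/(1+λ)) S g ≤ g` a.e., then `(λ/(1+λ)) S(√g) ≤ √g` a.e. -/
theorem sqrt_of_excessive_is_excessive
    {X : Type*} [MeasurableSpace X] (ν : Measure X) [IsProbabilityMeasure ν]
    (S : Lp ℝ 1 ν →ₗ[ℝ] Lp ℝ 1 ν)
    (hpos : ∀ f : Lp ℝ 1 ν, (∀ᵐ x ∂ν, 0 ≤ f x) → (∀ᵐ x ∂ν, 0 ≤ S f x))
    (hsub : ∀ f : Lp ℝ 1 ν, (∀ᵐ x ∂ν, f x = 1) → (∀ᵐ x ∂ν, S f x ≤ 1))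
    (lam : ℝ) (hlam : 0 < lam)
    (g : Lp ℝ 1 ν) (hg0 : ∀ᵐ x ∂ν, 0 ≤ g x)
    (hexc : ∀ᵐ x ∂ν, (lam / (1 + lam)) * S g x ≤ g x)
    (h : Lp ℝ 1 ν) (hh : ∀ᵐ x ∂ν, h x = Real.sqrt (g x)) :
    ∀ᵐ x ∂ν, (lam / (1 + lam)) * S h x ≤ Real.sqrt (g x) := by
  obtain ⟨e, he⟩ : ∃ e : Lp ℝ 1 ν, ∀ᵐ x ∂ν, e x = 1 :=
    ⟨(memLp_const (1 : ℝ)).toLp (fun _ => (1 : ℝ)), MemLp.coeFn_toLp _⟩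
  have hc0 : 0 < lam / (1 + lam) := by positivity
  have hc1 : lam / (1 + lam) ≤ 1 := by
    rw [div_le_one (by positivity)]; linarith
  set c := lam / (1 + lam) with hc
  have key : ∀ q : ℚ, ∀ᵐ x ∂ν, 0 < (q : ℝ) → 2 * (q : ℝ) * (c * S h x) ≤ g x + (q : ℝ) ^ 2 := by
    intro q
    have h1 : ∀ᵐ x ∂ν, 0 ≤ ((g + ((q : ℝ) ^ 2) • e) - (2 * (q : ℝ)) • h : Lp ℝ 1 ν) x := by
      filter_upwards [he, hg0, hh, Lp.coeFn_sub (g + ((q : ℝ) ^ 2) • e) ((2 * (q : ℝ)) • h),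
        Lp.coeFn_add g (((q : ℝ) ^ 2) • e), Lp.coeFn_smul ((q : ℝ) ^ 2) e,
        Lp.coeFn_smul (2 * (q : ℝ)) h] with x a1 a2 a3 a4 a5 a6 a7
      rw [a4, Pi.sub_apply, a5, Pi.add_apply, a6, a7, Pi.smul_apply, Pi.smul_apply, a1, a3,
        smul_eq_mul, smul_eq_mul]
      nlinarith [Real.sq_sqrt a2, sq_nonneg (Real.sqrt (g x) - q)]
    have h2 := hpos _ h1
    rw [map_sub, map_add, map_smul, map_smul] at h2
    filter_upwards [h2, hsub e he, hexc, Lp.coeFn_sub (S g + ((q : ℝ) ^ 2) • S e) ((2 * (q : ℝ)) • S h),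
        Lp.coeFn_add (S g) (((q : ℝ) ^ 2) • S e), Lp.coeFn_smul ((q : ℝ) ^ 2) (S e),
        Lp.coeFn_smul (2 * (q : ℝ)) (S h)] with x a1 a2 a3 a4 a5 a6 a7 _
    rw [a4, Pi.sub_apply, a5, Pi.add_apply, a6, a7, Pi.smul_apply, Pi.smul_apply,
        smul_eq_mul, smul_eq_mul] at a1
    have b1 := mul_nonneg hc0.le a1
    have b2 : c * S e x ≤ 1 := by nlinarith
    have b3 := mul_le_mul_of_nonneg_left b2 (sq_nonneg (q : ℝ))
    linarith
  filter_upwards [ae_all_iff.2 key, hg0] with x hx h0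
  by_contra! hlt
  obtain ⟨q, hq1, hq2⟩ := exists_rat_btwn hlt
  have hs := Real.sqrt_nonneg (g x)
  have hq : 0 < (q : ℝ) := by linarith
  have := hx q hq
  nlinarith [Real.sq_sqrt h0, mul_pos hq (sub_pos.2 hq2), mul_pos hq (sub_pos.2 hq1), mul_nonneg hs (sub_pos.2 hq1).le]
end

section
/- Let ℋ be a real Hilbert space and let N be a linear operator with dense domain D ⊆ ℋ and values in ℋ such that: (a) N is dissipative, i.e. ⟨Nφ, φ⟩ ≤ 0 for all φ ∈ D; (b) N is essentially m-dissipative, i.e. for every λ > 0 the set {λφ − Nφ : φ ∈ D} is dense in ℋ. Let c > 0 and let P : D → ℋ be a linear map satisfying ‖Pφ‖² ≤ −c ⟨Nφ, φ⟩ for all φ ∈ D. Then: (i) ⟨Nφ + Pφ, φ⟩ ≤ (c/2) ‖φ‖² for all φ ∈ D; and (ii) there exists λ₀ > 0 such that for every λ ≥ λ₀ the set {λφ − Nφ − Pφ : φ ∈ D} is dense in ℋ. -/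
open scoped InnerProductSpace

/-- Let `N` be a densely defined dissipative, essentially m-dissipative
linear operator on a real Hilbert space and `P` a perturbation with
`‖Pφ‖² ≤ −c⟨Nφ,φ⟩`. Then `N + P` is quasi-dissipative:
`⟨Nφ + Pφ, φ⟩ ≤ (c/2)‖φ‖²`, and there is `λ₀ > 0` such that for all `λ ≥ λ₀` the range of
`λ − N − P` is dense. -/
theorem perturbed_essentially_m_dissipative
    {E : Type*} [NormedAddCommGroup E] [InnerProductSpace ℝ E] [CompleteSpace E]
    (D : Submodule ℝ E) (hD : Dense (D : Set E))
    (N : D →ₗ[ℝ] E)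
    (hdiss : ∀ φ : D, ⟪N φ, (φ : E)⟫_ℝ ≤ 0)
    (hmdiss : ∀ lam : ℝ, 0 < lam →
      Dense (Set.range (fun φ : D => lam • (φ : E) - N φ)))
    (c : ℝ) (hc : 0 < c)
    (P : D →ₗ[ℝ] E)
    (hP : ∀ φ : D, ‖P φ‖ ^ 2 ≤ -c * ⟪N φ, (φ : E)⟫_ℝ) :
    (∀ φ : D, ⟪N φ + P φ, (φ : E)⟫_ℝ ≤ (c / 2) * ‖(φ : E)‖ ^ 2) ∧
    (∃ lam₀ : ℝ, 0 < lam₀ ∧ ∀ lam : ℝ, lam₀ ≤ lam →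
      Dense (Set.range (fun φ : D => lam • (φ : E) - N φ - P φ))) := by
  refine ⟨fun φ => ?_, c, hc, fun lam hlam => ?_⟩
  · have h1 := hP φ
    have h2 := real_inner_le_norm (P φ) (φ : E)
    rw [inner_add_left]
    have h3 : c * (⟪N φ, (φ : E)⟫_ℝ + ⟪P φ, (φ : E)⟫_ℝ) ≤ c * ((c / 2) * ‖(φ : E)‖ ^ 2) := by
      have h4 := mul_le_mul_of_nonneg_left h2 hc.le
      nlinarith [sq_nonneg (‖P φ‖ - c / 2 * ‖(φ : E)‖), sq_nonneg (c * ‖(φ : E)‖)]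
    exact le_of_mul_le_mul_left h3 hc
  · have hl : 0 < lam := hc.trans_le hlam
    have key : ∀ φ : D, ‖P φ‖ ≤ 1 / 2 * ‖lam • (φ : E) - N φ‖ := by
      intro φ
      have h1 := hP φ
      have h2 := real_inner_le_norm (lam • (φ : E) - N φ) (φ : E)
      have h3 : ⟪lam • (φ : E) - N φ, (φ : E)⟫_ℝ
          = lam * ‖(φ : E)‖ ^ 2 - ⟪N φ, (φ : E)⟫_ℝ := by
        rw [inner_sub_left, real_inner_smul_left, real_inner_self_eq_norm_sq]
      rw [h3] at h2
      set f := ‖lam • (φ : E) - N φ‖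
      have hf : 0 ≤ f := norm_nonneg _
      set x := ‖(φ : E)‖
      have h4 : ‖P φ‖ ^ 2 ≤ c * (f * x - lam * x ^ 2) := by nlinarith
      have h5 : c * (f * x - lam * x ^ 2) ≤ c * (f * x - c * x ^ 2) := by
        apply mul_le_mul_of_nonneg_left _ hc.le
        nlinarith [mul_le_mul_of_nonneg_right hlam (sq_nonneg x)]
      refine abs_le_of_sq_le_sq' ?_ (by positivity) |>.2
      nlinarith [sq_nonneg (f / 2 - c * x)]
    let T : D →ₗ[ℝ] E := lam • D.subtype - N - P
    have hT : Set.range (fun φ : D => lam • (φ : E) - N φ - P φ)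
        = ((LinearMap.range T : Submodule ℝ E) : Set E) := by
      ext y
      simp [T]
    rw [hT, Submodule.dense_iff_topologicalClosure_eq_top,
      Submodule.topologicalClosure_eq_top_iff, Submodule.eq_bot_iff]
    intro g hg
    have hcl : IsClosed {x : E | ⟪x, g⟫_ℝ ≤ 1 / 2 * ‖x‖ * ‖g‖} :=
      isClosed_le (by fun_prop) (by fun_prop)
    have hsub : Set.range (fun φ : D => lam • (φ : E) - N φ)
        ⊆ {x : E | ⟪x, g⟫_ℝ ≤ 1 / 2 * ‖x‖ * ‖g‖} := by
      rintro _ ⟨φ, rfl⟩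
      have h0 : ⟪lam • (φ : E) - N φ - P φ, g⟫_ℝ = 0 :=
        (Submodule.mem_orthogonal _ _).1 hg _ ⟨φ, by simp [T]⟩
      rw [inner_sub_left] at h0
      have h1 := real_inner_le_norm (P φ) g
      have h2 := mul_le_mul_of_nonneg_right (key φ) (norm_nonneg g)
      simp only [Set.mem_setOf_eq]
      linarith
    have hg2 : g ∈ {x : E | ⟪x, g⟫_ℝ ≤ 1 / 2 * ‖x‖ * ‖g‖} :=
      closure_minimal hsub hcl (hmdiss lam hl g)
    simp only [Set.mem_setOf_eq, real_inner_self_eq_norm_sq] at hg2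
    have : ‖g‖ = 0 := by
      have : ‖g‖ ^ 2 ≤ 0 := by nlinarith
      exact pow_eq_zero_iff (two_ne_zero) |>.1 (le_antisymm this (sq_nonneg _))
    exact norm_eq_zero.1 this
end

section
/- Let ℋ and K be real Hilbert spaces, and let N be a closable densely defined linear operator with domain D ⊆ ℋ and values in ℋ, with closure N̄ having domain D̄. Let T : D → K be a linear map satisfying ‖Tφ‖²_K = −2 ⟨Nφ, φ⟩ for all φ ∈ D. Then there exists a linear map T̄ : D̄ → K extending T such that ‖T̄φ‖²_K = −2 ⟨N̄φ, φ⟩ for all φ ∈ D̄; moreover, T̄φ = lim_{n→∞} Tφ_n in K whenever (φ_n) ⊆ D with φ_n → φ in ℋ and Nφ_n → N̄φ in ℋ, so T̄ is continuous with respect to the graph norm of N̄. -/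
open MeasureTheory Filter Topology
open scoped InnerProductSpace

/-- Let `N` be a closable densely defined operator on a real Hilbert
space `E` with closure `N̄`, and `T : D(N) → K` linear with `‖Tφ‖² = −2⟨Nφ,φ⟩`. Then `T`
extends to `T̄ : D(N̄) → K` with `‖T̄φ‖² = −2⟨N̄φ,φ⟩`, and `T̄φ = lim Tφₙ` whenever
`φₙ ∈ D(N)`, `φₙ → φ` and `Nφₙ → N̄φ`; in particular `T̄` is graph-norm continuous. -/
theorem extension_of_carre_du_champ
    {E : Type*} [NormedAddCommGroup E] [InnerProductSpace ℝ E] [CompleteSpace E]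
    {K : Type*} [NormedAddCommGroup K] [InnerProductSpace ℝ K] [CompleteSpace K]
    (N : E →ₗ.[ℝ] E) (hdense : Dense (N.domain : Set E)) (hclosable : N.IsClosable)
    (T : N.domain →ₗ[ℝ] K)
    (hT : ∀ φ : N.domain, ‖T φ‖ ^ 2 = -2 * ⟪N φ, (φ : E)⟫_ℝ) :
    ∃ Tbar : N.closure.domain →ₗ[ℝ] K,
      (∀ (x : E) (hx : x ∈ N.domain) (hx' : x ∈ N.closure.domain),
        Tbar ⟨x, hx'⟩ = T ⟨x, hx⟩) ∧
      (∀ φ : N.closure.domain, ‖Tbar φ‖ ^ 2 = -2 * ⟪N.closure φ, (φ : E)⟫_ℝ) ∧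
      (∀ (φ : N.closure.domain) (seq : ℕ → N.domain),
        Tendsto (fun n => ((seq n : E))) atTop (𝓝 (φ : E)) →
        Tendsto (fun n => N (seq n)) atTop (𝓝 (N.closure φ)) →
        Tendsto (fun n => T (seq n)) atTop (𝓝 (Tbar φ))) := by
  have hb : ∀ a : N.domain, ‖T a‖ ≤ ‖N a‖ + ‖(a : E)‖ := by
    intro a
    have h1 := hT a
    have h2 := abs_real_inner_le_norm (N a) (a : E)
    have h3 := neg_abs_le (⟪N a, (a : E)⟫_ℝ)
    have h4 := norm_nonneg (N a)
    have h5 := norm_nonneg (a : E)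
    refine le_of_sq_le_sq ?_ (by positivity)
    nlinarith [sq_nonneg ‖N a‖, sq_nonneg ‖(a : E)‖]
  have hbd : ∀ a b : N.domain, dist (T a) (T b) ≤ dist (N a) (N b) + dist (a : E) (b : E) := by
    intro a b
    have h := hb (a - b)
    rw [map_sub, LinearPMap.map_sub, Submodule.coe_sub] at h
    simpa only [dist_eq_norm] using h
  have hex : ∀ φ : N.closure.domain, ∃ s : ℕ → N.domain,
      Tendsto (fun n => ((s n : E))) atTop (𝓝 (φ : E)) ∧
      Tendsto (fun n => N (s n)) atTop (𝓝 (N.closure φ)) := by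
    intro φ
    have hm : ((φ : E), N.closure φ) ∈ N.graph.topologicalClosure := by
      rw [hclosable.graph_closure_eq_closure_graph]
      exact N.closure.mem_graph φ
    rw [← SetLike.mem_coe, Submodule.topologicalClosure_coe, mem_closure_iff_seq_limit] at hm
    obtain ⟨u, hu, hlim⟩ := hm
    have hu' : ∀ n, ∃ y : N.domain, (y : E) = (u n).1 ∧ N y = (u n).2 := fun n =>
      (LinearPMap.mem_graph_iff N).1 (hu n)
    choose s hs1 hs2 using hu'
    refine ⟨s, ?_, ?_⟩
    · simp only [hs1]
      exact (continuous_fst.tendsto _).comp hlim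
    · simp only [hs2]
      exact (continuous_snd.tendsto _).comp hlim
  choose s hs1 hs2 using hex
  have hlim : ∀ φ : N.closure.domain, ∃ y : K, Tendsto (fun n => T (s φ n)) atTop (𝓝 y) := by
    intro φ
    apply cauchySeq_tendsto_of_complete
    rw [cauchySeq_iff_tendsto_dist_atTop_0]
    refine squeeze_zero (fun _ => dist_nonneg) (fun n => hbd _ _) ?_
    have h1 := cauchySeq_iff_tendsto_dist_atTop_0.1 (hs1 φ).cauchySeq
    have h2 := cauchySeq_iff_tendsto_dist_atTop_0.1 (hs2 φ).cauchySeq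
    simpa using h2.add h1
  choose F hF using hlim
  have hall : ∀ (φ : N.closure.domain) (seq : ℕ → N.domain),
        Tendsto (fun n => ((seq n : E))) atTop (𝓝 (φ : E)) →
        Tendsto (fun n => N (seq n)) atTop (𝓝 (N.closure φ)) →
        Tendsto (fun n => T (seq n)) atTop (𝓝 (F φ)) := by
    intro φ seq h1 h2
    refine (hF φ).congr_dist ?_
    refine squeeze_zero (fun _ => dist_nonneg) (fun n => hbd _ _) ?_
    simpa using ((hs2 φ).dist h2).add ((hs1 φ).dist h1)
  refine ⟨{ toFun := F, map_add' := ?_, map_smul' := ?_ }, ?_, ?_, hall⟩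
  · intro x y
    refine tendsto_nhds_unique (hall (x + y) (fun n => s x n + s y n) ?_ ?_) ?_
    · simpa using (hs1 x).add (hs1 y)
    · simpa only [LinearPMap.map_add] using (hs2 x).add (hs2 y)
    · simpa only [map_add] using (hF x).add (hF y)
  · intro c x
    refine tendsto_nhds_unique (hall (c • x) (fun n => c • s x n) ?_ ?_) ?_
    · simpa using (hs1 x).const_smul c
    · simpa only [LinearPMap.map_smul] using (hs2 x).const_smul c
    · simpa only [map_smul, RingHom.id_apply] using (hF x).const_smul c
  · intro x hx hx'
    refine tendsto_nhds_unique (hall ⟨x, hx'⟩ (fun _ => ⟨x, hx⟩) tendsto_const_nhds ?_)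
      tendsto_const_nhds
    have : N ⟨x, hx⟩ = N.closure ⟨x, hx'⟩ := N.le_closure.2 rfl
    rw [this]
    exact tendsto_const_nhds
  · intro φ
    refine tendsto_nhds_unique ((hF φ).norm.pow 2) ?_
    simp only [hT]
    exact ((hs2 φ).inner (hs1 φ)).const_mul (-2)
end
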